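/- Let j ≥ 1 and n be integers with n − j ≥ 5, let m = ⌈(n−j)/2⌉, and define p̃(α) = d_{n−j−1}(α) − α·d_{m−1}(α)·d_{n−m−j−1}(α). Then p̃(1/√5) > 0, p̃(1/2) < 0, and consequently there exists a real number α with 1/√5 < α < 1/2 such that p̃(α) = 0. -/

import Mathlib

/-- `dpoly n α = ∑_{m=0}^{⌊n/2⌋} (-1)^m C(n-m, m) α^(2m)`. -/
noncomputable def dpoly (n : ℕ) (α : ℝ) : ℝ :=
  ∑ m ∈ Finset.range (n / 2 + 1), (-1 : ℝ) ^ m * (Nat.choose (n - m) m : ℝ) * α ^ (2 * m)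

theorem dpoly_ext (n K : ℕ) (α : ℝ) (hK : n / 2 + 1 ≤ K) :
    dpoly n α = ∑ m ∈ Finset.range K, (-1 : ℝ) ^ m * (Nat.choose (n - m) m : ℝ) * α ^ (2 * m) := by
  unfold dpoly
  apply Finset.sum_subset
  · intro x hx
    simp only [Finset.mem_range] at *
    omega
  · intro x _ hx
    simp only [Finset.mem_range] at hx
    rw [Nat.choose_eq_zero_of_lt (by omega)]
    simp

theorem dpoly_rec (n : ℕ) (α : ℝ) :
    dpoly (n + 2) α = dpoly (n + 1) α - α ^ 2 * dpoly n α := by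
  rw [dpoly_ext (n + 2) (n + 2) α (by omega), dpoly_ext (n + 1) (n + 2) α (by omega),
    dpoly_ext n (n + 1) α (by omega), Finset.sum_range_succ', Finset.sum_range_succ' _ (n + 1),
    Finset.mul_sum, add_sub_right_comm, ← Finset.sum_sub_distrib]
  congr 1
  · apply Finset.sum_congr rfl
    intro x hx
    simp only [Finset.mem_range] at hx
    have h1 : n + 2 - (x + 1) = (n - x) + 1 := by omega
    have h2 : n + 1 - (x + 1) = n - x := by omega
    rw [h1, h2, Nat.choose_succ_succ]
    push_cast
    ring

theorem dpoly_zero (α : ℝ) : dpoly 0 α = 1 := by simp [dpoly]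

theorem dpoly_one (α : ℝ) : dpoly 1 α = 1 := by simp [dpoly]

theorem dpoly_half (n : ℕ) : dpoly n (1 / 2) = (n + 1) * (1 / 2) ^ n := by
  induction n using Nat.twoStepInduction with
  | zero => simp [dpoly_zero]
  | one => rw [dpoly_one]; norm_num
  | more n h1 h2 =>
    rw [dpoly_rec, h1, h2]
    push_cast
    ring

theorem dpoly_roots (r s α : ℝ) (h1 : r + s = 1) (h2 : r * s = α ^ 2) (n : ℕ) :
    (r - s) * dpoly n α = r ^ (n + 1) - s ^ (n + 1) := by
  induction n using Nat.twoStepInduction with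
  | zero => simp [dpoly_zero]
  | one => rw [dpoly_one]; linear_combination (s - r) * h1
  | more n k1 k2 =>
    rw [dpoly_rec, ← h2]
    linear_combination k2 - r * s * k1 - (r ^ (n + 2) - s ^ (n + 2)) * h1

theorem dpoly_cont (n : ℕ) : Continuous (dpoly n) := by
  unfold dpoly
  fun_prop

theorem stmt19 (j n : ℕ) (hj : 1 ≤ j) (hn : j + 5 ≤ n)
    (m : ℕ) (hm : m = (n - j + 1) / 2)
    (ptilde : ℝ → ℝ)
    (hp : ∀ α : ℝ, ptilde α
      = dpoly (n - j - 1) α - α * dpoly (m - 1) α * dpoly (n - m - j - 1) α) :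
    0 < ptilde (1 / Real.sqrt 5) ∧ ptilde (1 / 2) < 0 ∧
      ∃ α : ℝ, 1 / Real.sqrt 5 < α ∧ α < 1 / 2 ∧ ptilde α = 0 := by
  obtain ⟨a, ha⟩ : ∃ a, m = a + 3 := ⟨m - 3, by omega⟩
  obtain ⟨b, hb⟩ : ∃ b, n - m - j = b + 2 := ⟨n - m - j - 2, by omega⟩
  have e1 : n - j - 1 = a + b + 4 := by omega
  have e2 : m - 1 = a + 2 := by omega
  have e3 : n - m - j - 1 = b + 1 := by omega
  rw [e1, e2, e3] at hp
  clear e1 e2 e3 hm ha hb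
  have hpos : 0 < ptilde (1 / Real.sqrt 5) := by
    rw [hp]
    set δ := 1 / Real.sqrt 5 with hδ
    have hδ0 : 0 < δ := by positivity
    have hsq : δ ^ 2 = 1 / 5 := by
      rw [hδ, div_pow, Real.sq_sqrt (by norm_num)]; norm_num
    have hδ1 : δ < 1 := by nlinarith
    obtain ⟨r, hr⟩ : ∃ r, r = (1 + δ) / 2 := ⟨_, rfl⟩
    obtain ⟨s, hs⟩ : ∃ s, s = (1 - δ) / 2 := ⟨_, rfl⟩
    have hrs : r - s = δ := by rw [hr, hs]; ring
    have h1 : r + s = 1 := by rw [hr, hs]; ring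
    have h2 : r * s = δ ^ 2 := by rw [hr, hs]; nlinarith
    have hs0 : 0 < s := by rw [hs]; linarith
    have hlt : s < r := by linarith
    have k := dpoly_roots r s δ h1 h2
    rw [hrs] at k
    have k1 := k (a + b + 4)
    have k2 := k (a + 2)
    have k3 := k (b + 1)
    have p1 : s ^ (a + 3) < r ^ (a + 3) := pow_lt_pow_left₀ hlt hs0.le (by omega)
    have p2 : s ^ (b + 2) < r ^ (b + 2) := pow_lt_pow_left₀ hlt hs0.le (by omega)
    have q1 : 0 < s ^ (a + 3) := by positivity
    have q2 : 0 < s ^ (b + 2) := by positivity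
    have key : δ * (dpoly (a + b + 4) δ - δ * dpoly (a + 2) δ * dpoly (b + 1) δ)
        = s ^ (b + 2) * (r ^ (a + 3) - s ^ (a + 3)) + s ^ (a + 3) * (r ^ (b + 2) - s ^ (b + 2)) := by
      have : δ * (δ * dpoly (a + 2) δ * dpoly (b + 1) δ)
        = (δ * dpoly (a + 2) δ) * (δ * dpoly (b + 1) δ) := by ring
      rw [mul_sub, this, k1, k2, k3]
      ring
    refine pos_of_mul_pos_right ?_ hδ0.le
    rw [key]
    have := mul_pos q2 (sub_pos.2 p1)
    have := mul_pos q1 (sub_pos.2 p2)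
    linarith
  have hneg : ptilde (1 / 2) < 0 := by
    rw [hp, dpoly_half, dpoly_half, dpoly_half]
    have hc : (0 : ℝ) < (1 / 2) ^ (a + b + 4) := by positivity
    have : (0 : ℝ) < (a * b + a + 2 * b + 1) * (1 / 2) ^ (a + b + 4) := by positivity
    push_cast
    have e : ((a : ℝ) + b + 4 + 1) * (1 / 2) ^ (a + b + 4) -
        1 / 2 * ((a + 2 + 1) * (1 / 2) ^ (a + 2)) * ((b + 1 + 1) * (1 / 2) ^ (b + 1))
        = - ((a * b + a + 2 * b + 1) * (1 / 2) ^ (a + b + 4)) := by ring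
    rw [e]
    linarith
  refine ⟨hpos, hneg, ?_⟩
  have hcont : Continuous ptilde := by
    rw [funext hp]
    have := dpoly_cont (a + b + 4)
    have := dpoly_cont (a + 2)
    have := dpoly_cont (b + 1)
    fun_prop
  have hle : 1 / Real.sqrt 5 ≤ 1 / 2 := by
    apply one_div_le_one_div_of_le (by norm_num)
    apply Real.le_sqrt_of_sq_le
    norm_num
  obtain ⟨x, hx, hx0⟩ := intermediate_value_Ioo' hle hcont.continuousOn ⟨hneg, hpos⟩
  exact ⟨x, hx.1, hx.2, hx0⟩
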